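/- The scalar function φ*(s) = -(1/m)·log(b/(b + m·s)) + (s/b)·log(-b/(m·s) - 1), defined on the open interval where -1/m < s·b < 0 (b ∈ {-1,1}), has second derivative φ*''(s) = -1/((b + m·s)·s), and this second derivative is strictly positive on the domain; hence φ* is strictly convex there. -/

import Mathlib

/-- Sign facts on the domain. -/
theorem aux_dom (m : ℕ) (hm : 0 < m) (b : ℝ) (hb : b = 1 ∨ b = -1) (s : ℝ)
    (h1 : -(1 / (m : ℝ)) < s * b) (h2 : s * b < 0) :
    s ≠ 0 ∧ b + m * s ≠ 0 ∧ (b + m * s) * s < 0 := by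
  have hm' : (0 : ℝ) < m := by exact_mod_cast hm
  have h3 : -1 < m * (s * b) := by
    have := mul_lt_mul_of_pos_left h1 hm'
    have e : (m : ℝ) * -(1 / (m : ℝ)) = -1 := by field_simp
    linarith
  have hs : s ≠ 0 := by rintro rfl; simp at h2
  have h4 : (b + m * s) * s < 0 := by
    rcases hb with rfl | rfl
    · have : 0 < 1 + m * s := by linarith
      have : s < 0 := by linarith
      nlinarith
    · have : -1 + m * s < 0 := by linarith
      have : 0 < s := by linarith
      nlinarith
  refine ⟨hs, ?_, h4⟩
  intro h
  rw [h] at h4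
  simp at h4

theorem aux_log (m : ℕ) (hm : 0 < m) (b : ℝ) (s : ℝ)
    (hb0 : b ≠ 0) (hs : s ≠ 0) (hbs : b + m * s ≠ 0) :
    HasDerivAt (fun s : ℝ => Real.log (-b / (m * s) - 1)) (-b / ((b + m * s) * s)) s := by
  have hm' : (m : ℝ) ≠ 0 := by exact_mod_cast hm.ne'
  have hms : (m : ℝ) * s ≠ 0 := mul_ne_zero hm' hs
  have e : -b / (m * s) - 1 = -(b + m * s) / (m * s) := by field_simp; ring
  have hne : -b / (m * s) - 1 ≠ 0 := by
    rw [e]; exact div_ne_zero (neg_ne_zero.mpr hbs) hms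
  have h := ((((hasDerivAt_const s (-b)).div ((hasDerivAt_id s).const_mul (m : ℝ)) hms).sub_const
    1).log hne)
  refine h.congr_deriv ?_
  simp only [id, Pi.div_apply]
  rw [e]
  field_simp
  ring

theorem aux_d1 (m : ℕ) (hm : 0 < m) (b : ℝ) (s : ℝ)
    (hb0 : b ≠ 0) (hs : s ≠ 0) (hbs : b + m * s ≠ 0) :
    HasDerivAt (fun s : ℝ =>
        -(1 / (m : ℝ)) * Real.log (b / (b + m * s)) +
          (s / b) * Real.log (-b / (m * s) - 1)) (1 / b * Real.log (-b / (m * s) - 1)) s := by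
  have hm' : (m : ℝ) ≠ 0 := by exact_mod_cast hm.ne'
  have hA := ((((hasDerivAt_const s b).div (((hasDerivAt_id s).const_mul (m : ℝ)).const_add b)
    hbs).log (div_ne_zero hb0 hbs)).const_mul (-(1 / (m : ℝ))))
  have hB := ((hasDerivAt_id s).div_const b).mul (aux_log m hm b s hb0 hs hbs)
  refine (hA.add hB).congr_deriv ?_
  simp only [id, Pi.div_apply]
  field_simp
  ring

/-- Second derivative of the conjugate logistic loss is -1/((b+ms)s) > 0 on the domain,
    and the conjugate is strictly convex there. -/
theorem stmt3 (m : ℕ) (hm : 0 < m) (b : ℝ) (hb : b = 1 ∨ b = -1) :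
    (∀ s : ℝ, -(1 / (m : ℝ)) < s * b → s * b < 0 →
      HasDerivAt
        (deriv (fun s : ℝ =>
          -(1 / (m : ℝ)) * Real.log (b / (b + m * s)) +
            (s / b) * Real.log (-b / (m * s) - 1)))
        (-1 / ((b + m * s) * s)) s ∧ 0 < -1 / ((b + m * s) * s)) ∧
    StrictConvexOn ℝ {s : ℝ | -(1 / (m : ℝ)) < s * b ∧ s * b < 0}
      (fun s : ℝ =>
        -(1 / (m : ℝ)) * Real.log (b / (b + m * s)) +
          (s / b) * Real.log (-b / (m * s) - 1)) := by
  have hb0 : b ≠ 0 := by rcases hb with rfl | rfl <;> norm_num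
  have hopen : IsOpen {s : ℝ | -(1 / (m : ℝ)) < s * b ∧ s * b < 0} :=
    isOpen_Ioo.preimage (f := fun s : ℝ => s * b) (by fun_prop)
  have key : ∀ s : ℝ, -(1 / (m : ℝ)) < s * b → s * b < 0 →
      HasDerivAt
        (deriv (fun s : ℝ =>
          -(1 / (m : ℝ)) * Real.log (b / (b + m * s)) +
            (s / b) * Real.log (-b / (m * s) - 1)))
        (-1 / ((b + m * s) * s)) s ∧ 0 < -1 / ((b + m * s) * s) := by
    intro s h1 h2
    obtain ⟨hs, hbs, hneg⟩ := aux_dom m hm b hb s h1 h2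
    refine ⟨?_, div_pos_of_neg_of_neg (by norm_num) hneg⟩
    have h := (aux_log m hm b s hb0 hs hbs).const_mul (1 / b)
    refine (h.congr_deriv (by field_simp)).congr_of_eventuallyEq ?_
    filter_upwards [hopen.mem_nhds ⟨h1, h2⟩] with t ht
    obtain ⟨ht0, hbt, -⟩ := aux_dom m hm b hb t ht.1 ht.2
    exact (aux_d1 m hm b t hb0 ht0 hbt).deriv
  refine ⟨key, ?_⟩
  apply strictConvexOn_of_deriv2_pos
  · have : {s : ℝ | -(1 / (m : ℝ)) < s * b ∧ s * b < 0} =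
        (LinearMap.mulRight ℝ b) ⁻¹' (Set.Ioo (-(1 / (m : ℝ))) 0) := by
      ext s; simp
    rw [this]
    exact (convex_Ioo _ _).linear_preimage _
  · intro s hs
    obtain ⟨hs0, hbs, -⟩ := aux_dom m hm b hb s hs.1 hs.2
    exact (aux_d1 m hm b s hb0 hs0 hbs).continuousAt.continuousWithinAt
  · intro s hs
    rw [hopen.interior_eq] at hs
    obtain ⟨h, hp⟩ := key s hs.1 hs.2
    simp only [Function.iterate_succ, Function.iterate_zero, Function.comp_apply, id]
    rw [h.deriv]
    exact hp
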